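/- arXiv:2103.08027 — 2 statements merged into one kernel-verified Lean document; each statement's English description precedes it below -/
import Mathlib

section
/- Let n ∈ ℕ, let a_1, …, a_n ∈ ℂ, and let z ∈ ℂ with Re(z) > 0. Then the series ∑_{k=1}^{∞} (−1)^k (∑_{l=1}^{n} (−1)^l S_k^{(1)}(l) a_l) / ((z+1)(z+2)⋯(z+k)) converges and its sum equals the finite sum ∑_{k=1}^{n} a_k / z^k. -/
open Finset in
/-- Unsigned Stirling numbers of the first kind, via the rising-factorial recurrence:
`z(z+1)⋯(z+k−1) = ∑ l, stirling1Unsigned k l * z^l`. -/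
def stirling1Unsigned : ℕ → ℕ → ℕ
  | 0, 0 => 1
  | 0, _ + 1 => 0
  | k + 1, 0 => k * stirling1Unsigned k 0
  | k + 1, l + 1 => stirling1Unsigned k l + k * stirling1Unsigned k (l + 1)

/-- The Stirling numbers of the first kind `S_k^{(1)}(l)` of the paper, defined by
`z(z+1)⋯(z+k−1) = (−1)^k ∑_{l=0}^k (−1)^l S_k^{(1)}(l) z^l`, i.e.
`S_k^{(1)}(l) = (−1)^{k−l}` times the coefficient of `z^l` in the rising factorial. -/
def S1 (k l : ℕ) : ℤ := (-1) ^ (k + l) * stirling1Unsigned k l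

/-- The `n`-th Bernoulli polynomial `B_n(x) = ∑_{k=0}^n C(n,k) B_k x^{n−k}`,
with `B_1 = −1/2`. -/
noncomputable def bernPoly (n : ℕ) (x : ℝ) : ℝ :=
  ∑ k ∈ Finset.range (n + 1), (n.choose k : ℝ) * (bernoulli k : ℝ) * x ^ (n - k)

/-- The generalized binomial coefficient `C(w,k) = w(w−1)⋯(w−k+1)/k!`. -/
noncomputable def cchoose (w : ℂ) (k : ℕ) : ℂ :=
  (∏ i ∈ Finset.range k, (w - i)) / (k.factorial : ℂ)

/-- The rising product `(z+1)(z+2)⋯(z+k)`. -/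
noncomputable def risingProd (z : ℂ) (k : ℕ) : ℂ :=
  ∏ i ∈ Finset.range k, (z + i + 1)

/-- The rising product `(x+1)(x+2)⋯(x+k)` over the reals. -/
noncomputable def risingProdR (x : ℝ) (k : ℕ) : ℝ :=
  ∏ i ∈ Finset.range k, (x + i + 1)

/-- The digamma function `ψ(z) = Γ′(z)/Γ(z)`. -/
noncomputable def digamma (z : ℂ) : ℂ := deriv Complex.Gamma z / Complex.Gamma z

/-!
Write `c(k, l)` for the unsigned Stirling numbers and `T l k = c(k, l) / ((z+1)⋯(z+k))`. The
Stirling recurrence becomes `z T (l+1) (k+1) = T l k - ((k+1) T (l+1) (k+1) - k T (l+1) k)`, so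
summing over `k` shows that passing from `l` to `l + 1` divides the sum of the series by `z`, up to
the limit of `k T (l+1) k`. The same recurrence for norms, where `‖z+k+1‖ ≥ Re z + k + 1`, bounds
the partial sums of `‖T (l+1) k‖` and gives absolute convergence; the limit then exists and
vanishes, since otherwise `T (l+1) k` would be comparable to the terms of the harmonic series.
-/

open Filter Topology Asymptotics

section Recurrence

variable {𝕜 : Type*} [RCLike 𝕜]

theorem eq_zero_of_summable_of_tendsto_natCast_mul {f : ℕ → 𝕜} {L : 𝕜} (hf : Summable f)
    (hL : Tendsto (fun n : ℕ => (n : 𝕜) * f n) atTop (𝓝 L)) : L = 0 := by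
  by_contra hL0
  have one_isBigO : (fun _ : ℕ => (1 : ℝ)) =O[atTop] fun n : ℕ => (n : 𝕜) * f n :=
    (isBigO_const_const 1 hL0 atTop).trans
      ((isEquivalent_const_iff_tendsto hL0).2 hL).isBigO_symm
  have inv_isBigO : (fun n : ℕ => (n : ℝ)⁻¹) =O[atTop] fun n => ‖f n‖ := by
    have inv_natCast_isBigO : (fun n : ℕ => (n : ℝ)⁻¹) =O[atTop] fun n : ℕ => (n : 𝕜)⁻¹ :=
      isBigO_of_le _ fun n => by simp
    refine (inv_natCast_isBigO.norm_right.mul one_isBigO.norm_right).congr' (by simp) ?_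
    filter_upwards [eventually_ne_atTop 0] with n hn
    rw [← norm_mul, inv_mul_cancel_left₀ (Nat.cast_ne_zero.2 hn)]
  exact Real.not_summable_natCast_inv (summable_of_isBigO_nat hf.norm inv_isBigO)

theorem summable_of_mul_succ_le {x : ℝ} (hx : 0 < x) {u v : ℕ → ℝ} (hu0 : ∀ k, 0 ≤ u k)
    (hv0 : ∀ k, 0 ≤ v k) (hu : Summable u)
    (hrec : ∀ k : ℕ, (x + k + 1) * v (k + 1) ≤ u k + k * v k) : Summable v := by
  rw [← summable_nat_add_iff 1]
  refine summable_of_sum_range_le (c := (∑' k, u k) / x) (fun k => hv0 _) fun K => ?_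
  rw [le_div_iff₀' hx, Finset.mul_sum]
  calc ∑ k ∈ Finset.range K, x * v (k + 1)
      ≤ ∑ k ∈ Finset.range K, (u k + (k * v k - (k + 1 : ℕ) * v (k + 1))) :=
        Finset.sum_le_sum fun k _ => by push_cast; linarith [hrec k]
    _ = ∑ k ∈ Finset.range K, u k - K * v K := by
        rw [Finset.sum_add_distrib, Finset.sum_range_sub' fun k : ℕ => k * v k]
        simp [sub_eq_add_neg]
    _ ≤ ∑ k ∈ Finset.range K, u k := sub_le_self _ (mul_nonneg K.cast_nonneg (hv0 K))
    _ ≤ ∑' k, u k := hu.sum_le_tsum _ fun k _ => hu0 k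

theorem re_add_natCast_add_one_le_norm (z : 𝕜) (k : ℕ) : RCLike.re z + k + 1 ≤ ‖z + k + 1‖ := by
  simpa using RCLike.re_le_norm (z + k + 1)

variable {z : 𝕜} {u v : ℕ → 𝕜}

theorem summable_of_mul_succ_eq (hz : 0 < RCLike.re z) (hu : Summable u)
    (hrec : ∀ k : ℕ, (z + k + 1) * v (k + 1) = u k + k * v k) : Summable v := by
  refine .of_norm (summable_of_mul_succ_le hz (fun k => norm_nonneg (u k))
    (fun k => norm_nonneg (v k)) hu.norm fun k => ?_)
  calc (RCLike.re z + k + 1) * ‖v (k + 1)‖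
      ≤ ‖z + k + 1‖ * ‖v (k + 1)‖ := by gcongr; exact re_add_natCast_add_one_le_norm z k
    _ = ‖u k + k * v k‖ := by rw [← norm_mul, hrec]
    _ ≤ ‖u k‖ + k * ‖v k‖ := (norm_add_le _ _).trans_eq (by simp)

theorem hasSum_succ_of_mul_succ_eq (hz : 0 < RCLike.re z) {s : 𝕜} (hu : HasSum u s)
    (hrec : ∀ k : ℕ, (z + k + 1) * v (k + 1) = u k + k * v k) :
    HasSum (fun k => v (k + 1)) (s / z) := by
  have hz0 : z ≠ 0 := by rintro rfl; simp at hz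
  have hv : Summable v := summable_of_mul_succ_eq hz hu.summable hrec
  obtain ⟨t, ht⟩ := (summable_nat_add_iff 1).2 hv
  have telescoping (K : ℕ) :
      ∑ k ∈ Finset.range K, (u k - z * v (k + 1)) = K * v K := by
    refine Finset.sum_range_induction _ (fun k : ℕ => k * v k) (by simp) K fun k _ => ?_
    push_cast
    linear_combination hrec k
  have boundary_tendsto : Tendsto (fun K : ℕ => (K : 𝕜) * v K) atTop (𝓝 (s - z * t)) := by
    simpa only [telescoping] using (hu.sub (ht.mul_left z)).tendsto_sum_nat
  have sum_eq : s = z * t :=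
    sub_eq_zero.1 (eq_zero_of_summable_of_tendsto_natCast_mul hv boundary_tendsto)
  rwa [sum_eq, mul_div_cancel_left₀ t hz0]

end Recurrence

theorem stirling1Unsigned_succ_zero (k : ℕ) : stirling1Unsigned (k + 1) 0 = 0 := by
  induction k with
  | zero => simp [stirling1Unsigned]
  | succ k ih => rw [stirling1Unsigned, ih, mul_zero]

theorem neg_one_pow_mul_S1 (k l : ℕ) :
    (-1) ^ k * ((-1) ^ l * S1 k l) = stirling1Unsigned k l := by
  rw [S1, ← mul_assoc, ← pow_add, ← mul_assoc, ← pow_add, Even.neg_one_pow ⟨_, rfl⟩, one_mul]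

theorem add_natCast_add_one_ne_zero {z : ℂ} (hz : 0 < z.re) (k : ℕ) : z + k + 1 ≠ 0 :=
  norm_pos_iff.1 ((by positivity : 0 < z.re + k + 1).trans_le (re_add_natCast_add_one_le_norm z k))

theorem risingProd_ne_zero {z : ℂ} (hz : 0 < z.re) (k : ℕ) : risingProd z k ≠ 0 :=
  Finset.prod_ne_zero_iff.2 fun i _ => add_natCast_add_one_ne_zero hz i

/-- The `k`-th term `c(k, l) / ((z+1)⋯(z+k))` of the inverse factorial series of `1 / z ^ l`, where
`c(k, l)` is the unsigned Stirling number of the first kind. Indexing starts at `k = 0`, whose term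
vanishes unless `l = 0`. -/
noncomputable def stirlingTerm (z : ℂ) (l k : ℕ) : ℂ := stirling1Unsigned k l / risingProd z k

theorem stirlingTerm_succ_succ {z : ℂ} (hz : 0 < z.re) (l k : ℕ) :
    (z + k + 1) * stirlingTerm z (l + 1) (k + 1) =
      stirlingTerm z l k + k * stirlingTerm z (l + 1) k := by
  have factor_ne_zero := add_natCast_add_one_ne_zero hz k
  have prod_ne_zero := risingProd_ne_zero hz k
  have prod_succ : risingProd z (k + 1) = risingProd z k * (z + k + 1) :=
    Finset.prod_range_succ _ _
  simp only [stirlingTerm, prod_succ, stirling1Unsigned]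
  push_cast
  field_simp

theorem stirlingTerm_succ_zero (z : ℂ) (l : ℕ) : stirlingTerm z (l + 1) 0 = 0 := by
  simp [stirlingTerm, stirling1Unsigned]

theorem hasSum_stirlingTerm_zero (z : ℂ) : HasSum (stirlingTerm z 0) 1 := by
  have term_zero : stirlingTerm z 0 0 = 1 := by
    simp [stirlingTerm, stirling1Unsigned, risingProd]
  rw [← term_zero]
  refine hasSum_single 0 fun k hk => ?_
  obtain ⟨k, rfl⟩ := Nat.exists_eq_succ_of_ne_zero hk
  simp [stirlingTerm, stirling1Unsigned_succ_zero]

theorem hasSum_stirlingTerm {z : ℂ} (hz : 0 < z.re) (l : ℕ) :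
    HasSum (stirlingTerm z l) (1 / z ^ l) := by
  induction l with
  | zero => simpa using hasSum_stirlingTerm_zero z
  | succ l ih =>
    have tail := hasSum_succ_of_mul_succ_eq hz ih (stirlingTerm_succ_succ hz l)
    rw [pow_succ, ← div_div]
    simpa [stirlingTerm_succ_zero] using (hasSum_nat_add_iff 1).1 tail

theorem hasSum_stirlingTerm_succ {z : ℂ} (hz : 0 < z.re) {l : ℕ} (hl : l ≠ 0) :
    HasSum (fun k => stirlingTerm z l (k + 1)) (1 / z ^ l) := by
  obtain ⟨l, rfl⟩ := Nat.exists_eq_succ_of_ne_zero hl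
  rw [hasSum_nat_add_iff 1]
  simpa [stirlingTerm_succ_zero] using hasSum_stirlingTerm hz (l + 1)

theorem neg_one_pow_mul_sum_S1_div_risingProd (s : Finset ℕ) (a : ℕ → ℂ) (z : ℂ) (k : ℕ) :
    (-1) ^ k * (∑ l ∈ s, (-1) ^ l * (S1 k l : ℂ) * a l) / risingProd z k =
      ∑ l ∈ s, a l * stirlingTerm z l k := by
  rw [Finset.mul_sum, Finset.sum_div]
  refine Finset.sum_congr rfl fun l _ => ?_
  have sign_cancel : (-1 : ℂ) ^ k * ((-1) ^ l * S1 k l) = stirling1Unsigned k l :=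
    mod_cast congrArg (Int.cast : ℤ → ℂ) (neg_one_pow_mul_S1 k l)
  rw [← mul_assoc, sign_cancel, mul_comm, mul_div_assoc, stirlingTerm]

open Finset in
/-- Exact part of the finite Weniger transformation (Lemma 3.1, formula (9)):
for `Re(z) > 0`, the inverse factorial series with coefficients
`(−1)^k ∑_{l=1}^n (−1)^l S_k^{(1)}(l) a_l` converges to `∑_{k=1}^n a_k/z^k`. -/
theorem weniger_finite_exact (n : ℕ) (a : ℕ → ℂ) (z : ℂ) (hz : 0 < z.re) :
    Summable (fun k : ℕ =>
      (-1 : ℂ) ^ (k + 1) * (∑ l ∈ Icc 1 n, (-1 : ℂ) ^ l * (S1 (k + 1) l : ℂ) * a l) /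
        risingProd z (k + 1)) ∧
    ∑' k : ℕ,
        (-1 : ℂ) ^ (k + 1) * (∑ l ∈ Icc 1 n, (-1 : ℂ) ^ l * (S1 (k + 1) l : ℂ) * a l) /
          risingProd z (k + 1)
      = ∑ k ∈ Icc 1 n, a k / z ^ k := by
  simp only [neg_one_pow_mul_sum_S1_div_risingProd, ← mul_one_div (a _)]
  have hasSum_terms : HasSum (fun k => ∑ l ∈ Icc 1 n, a l * stirlingTerm z l (k + 1))
      (∑ l ∈ Icc 1 n, a l * (1 / z ^ l)) :=
    hasSum_sum fun l hl =>
      (hasSum_stirlingTerm_succ hz (Nat.one_le_iff_ne_zero.1 (mem_Icc.1 hl).1)).mul_left (a l)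
  exact ⟨hasSum_terms.summable, hasSum_terms.tsum_eq⟩
end

section
/- Inverse factorial series expansion for the digamma function: Let y ∈ [0,1] be real, let a ∈ ℕ₀, and let z ∈ ℂ with Re(z) > 0. Then the series ∑_{k=1}^{∞} (−1)^{k+1} (∑_{l=1}^{k} ((−1)^l/(l+a)) S_k^{(1)}(l) B_{l+a}(y)) / ((z+1)(z+2)⋯(z+k)) converges absolutely, and ψ(z + 1 − y) = log(z) − ∑_{k=1}^{a} B_k(y)/(k z^k) + (1/z^a) ∑_{k=1}^{∞} (−1)^{k+1} (∑_{l=1}^{k} ((−1)^l/(l+a)) S_k^{(1)}(l) B_{l+a}(y)) / ((z+1)(z+2)⋯(z+k)). -/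
/-!
Let `L` be the linear functional `X ^ n ↦ B_n(y) / n` and write `(x)_k` for the rising factorial. Up
to sign the numerators of the series are `b a k = L (X ^ a (X)_k)`.

The properties `L (X (p(X + 1) - p(X))) = p(y) - ∫₀¹ p` and `X ((X + 1)_k - (X)_k) = k (X)_k` give
`k b 0 k = (y)_k - ∫₀¹ (s)_k ds`. Combined with the telescoping sum
`∑ (s)_k / (z + 1)_{k + 1} = 1 / (z + 1 - s)`, this shows that `R z = ∑ b 0 k / (z + 1)_k` satisfies
`R z - R (z + 1) = 1 / (z + 1 - y) - log (z + 1) + log z`. Hence `ψ(z + 1 - y) - log z + R z` is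
`1`-periodic on the positive reals; it tends to `0` at infinity, so it vanishes there, and by the
identity theorem on the whole right half-plane. This is the case `a = 0`.

The recursion `b (a + 1) k = b a (k + 1) - k b a k` passes from `a` to `a + 1` by Abel summation,
which splits off one term `B_{a + 1}(y) / (a + 1)`. Absolute convergence requires
`b a (k + 1) = O(k!)`. In terms of `b a (k + 1) / k!` the recursion is `f ↦ (m + 1) Δf`, so the
induction has to control all iterated differences; for `a = 0` these are explicit because
`Δ_m (s)_m / m! = (s - 1)_{m + 1} / (m + 1)!`.
-/

section AscPochhammer

open Polynomial

lemma stirling1Unsigned_eq_stirlingFirst (k l : ℕ) :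
    stirling1Unsigned k l = Nat.stirlingFirst k l := by
  induction k generalizing l with
  | zero => cases l <;> rfl
  | succ k ih =>
    cases l with
    | zero => rw [stirling1Unsigned, ih]; cases k <;> simp
    | succ l => rw [stirling1Unsigned, Nat.stirlingFirst_succ_succ, ih, ih, add_comm]

lemma coeff_ascPochhammer (R : Type*) [Semiring R] (k l : ℕ) :
    (ascPochhammer R k).coeff l = Nat.stirlingFirst k l := by
  induction k generalizing l with
  | zero => cases l <;> simp [coeff_one]
  | succ k ih =>
    rw [ascPochhammer_succ_right, mul_add, coeff_add, coeff_mul_natCast, ih]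
    cases l with
    | zero => cases k <;> simp
    | succ l =>
      rw [coeff_mul_X, ih, Nat.stirlingFirst_succ_succ]
      push_cast
      rw [Nat.cast_comm, add_comm]

lemma X_mul_ascPochhammer_comp_sub (R : Type*) [CommRing R] (k : ℕ) :
    X * ((ascPochhammer R k).comp (X + 1) - ascPochhammer R k) =
      (k : R[X]) * ascPochhammer R k := by
  cases k with
  | zero => simp
  | succ k =>
    rw [ascPochhammer_succ_comp_X_add_one, add_sub_cancel_left, mul_smul_comm,
      ← ascPochhammer_succ_left, nsmul_eq_mul]

lemma ascPochhammer_eval_succ_left {R : Type*} [CommSemiring R] (k : ℕ) (x : R) :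
    (ascPochhammer R (k + 1)).eval x = x * (ascPochhammer R k).eval (x + 1) := by
  simp [ascPochhammer_succ_left, eval_comp]

lemma ascPochhammer_eval_eq_prod_range {R : Type*} [CommSemiring R] (k : ℕ) (x : R) :
    (ascPochhammer R k).eval x = ∏ i ∈ Finset.range k, (x + i) := by
  induction k with
  | zero => simp
  | succ k ih => rw [ascPochhammer_succ_eval, Finset.prod_range_succ, ih]

lemma ascPochhammer_eval_ofReal (k : ℕ) (x : ℝ) :
    (((ascPochhammer ℝ k).eval x : ℝ) : ℂ) = (ascPochhammer ℂ k).eval (x : ℂ) := by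
  simp [ascPochhammer_eval_eq_prod_range]

lemma risingProd_eq_ascPochhammer_eval (z : ℂ) (k : ℕ) :
    risingProd z k = (ascPochhammer ℂ k).eval (z + 1) := by
  rw [risingProd, ascPochhammer_eval_eq_prod_range]
  exact Finset.prod_congr rfl fun i _ => by ring

lemma inv_ascPochhammer_eval_sub_inv {K : Type*} [Field K] {x : K} {k : ℕ}
    (hx : (ascPochhammer K (k + 1)).eval x ≠ 0) :
    ((ascPochhammer K k).eval x)⁻¹ - ((ascPochhammer K k).eval (x + 1))⁻¹ =
      k / (ascPochhammer K (k + 1)).eval x := by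
  have hleft := ascPochhammer_eval_succ_left k x
  have hright := ascPochhammer_succ_eval k x
  obtain ⟨hxk, hk⟩ := mul_ne_zero_iff.1 (hright ▸ hx)
  have hxk' := right_ne_zero_of_mul (hleft ▸ hx)
  rw [hright] at hleft ⊢
  field_simp
  linear_combination -hleft

end AscPochhammer

section BernoulliFunctional

open Polynomial Finset

lemma bernPoly_eq_bernoulliFun (n : ℕ) (x : ℝ) : bernPoly n x = bernoulliFun n x := by
  simp only [bernPoly, bernoulliFun, Polynomial.bernoulli, Polynomial.map_sum, map_monomial,
    eval_finsetSum, eval_monomial, eq_ratCast]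
  exact sum_congr rfl fun k _ => by push_cast; ring

lemma sum_choose_mul_bernoulliFun (n : ℕ) (x : ℝ) :
    ∑ k ∈ range (n + 1), ((n + 1).choose k : ℝ) * bernoulliFun k x = (n + 1) * x ^ n := by
  have h := congr_arg (aeval x) (Polynomial.sum_bernoulli n)
  simpa [bernoulliFun, eval_map_algebraMap, aeval_monomial, Algebra.smul_def, add_mul]
    using h

/-- The linear functional on polynomials sending `X ^ n` to `B_n(y) / n`, which is how the Bernoulli
polynomials enter the series. At `n = 0` the division by zero makes the value `0`. -/
noncomputable def bernoulliFunctional (y : ℝ) : ℝ[X] →ₗ[ℝ] ℝ :=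
  lsum fun n => (bernoulliFun n y / n) • LinearMap.id

lemma bernoulliFunctional_X_pow (y : ℝ) (n : ℕ) :
    bernoulliFunctional y (X ^ n) = bernoulliFun n y / n := by
  simp [bernoulliFunctional, lsum_apply, ← monomial_one_right_eq_X_pow, sum_monomial_index]

lemma bernoulliFunctional_X_mul_pow_sub (y : ℝ) (n : ℕ) :
    bernoulliFunctional y (X * ((X + 1) ^ n - X ^ n)) = y ^ n - 1 / (n + 1) := by
  have hX : X * ((X + 1) ^ n - X ^ n) =
      ∑ k ∈ range n, (n.choose k : ℝ) • (X ^ (k + 1) : ℝ[X]) := by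
    rw [add_pow, sum_range_succ]
    simp only [one_pow, mul_one, Nat.choose_self, Nat.cast_one, add_sub_cancel_right, mul_sum]
    exact sum_congr rfl fun k _ => by rw [Nat.cast_smul_eq_nsmul, nsmul_eq_mul]; ring
  have hchoose (k : ℕ) : (n.choose k : ℝ) * (bernoulliFun (k + 1) y / (k + 1 : ℕ)) =
      ((n + 1).choose (k + 1) * bernoulliFun (k + 1) y) / (n + 1) := by
    have h : ((n + 1 : ℕ) : ℝ) * n.choose k = (n + 1).choose (k + 1) * (k + 1 : ℕ) :=
      mod_cast Nat.add_one_mul_choose_eq n k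
    push_cast at h ⊢
    field_simp
    linear_combination bernoulliFun (k + 1) y * h
  have hsum := sum_choose_mul_bernoulliFun n y
  rw [sum_range_succ'] at hsum
  simp only [hX, map_sum, map_smul, bernoulliFunctional_X_pow, smul_eq_mul, hchoose, ← sum_div]
  field_simp
  simp only [Nat.choose_zero_right, Nat.cast_one, bernoulliFun_zero, one_mul] at hsum
  linarith

lemma bernoulliFunctional_X_mul_comp_sub (y : ℝ) (p : ℝ[X]) :
    bernoulliFunctional y (X * (p.comp (X + 1) - p)) =
      p.eval y - ∫ s in (0 : ℝ)..1, p.eval s := by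
  induction p using Polynomial.induction_on' with
  | add p q hp hq =>
    simp only [eval_add]
    rw [intervalIntegral.integral_add (p.continuous.intervalIntegrable _ _)
      (q.continuous.intervalIntegrable _ _), add_comp, add_sub_add_comm, mul_add, map_add, hp, hq]
    ring
  | monomial n c =>
    rw [monomial_comp, ← C_mul_X_pow_eq_monomial, ← mul_sub, mul_left_comm, ← smul_eq_C_mul,
      map_smul, bernoulliFunctional_X_mul_pow_sub]
    simp [mul_sub]

end BernoulliFunctional

section Multichoose

open Polynomial Ring

lemma multichoose_eq_ascPochhammer_eval_div {K : Type*} [Field K] [CharZero K] (x : K) (k : ℕ) :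
    multichoose x k = (ascPochhammer K k).eval x / k.factorial := by
  rw [← ascPochhammer_smeval_eq_eval, ← factorial_nsmul_multichoose_eq_ascPochhammer,
    nsmul_eq_mul, mul_div_cancel_left₀ _ (Nat.cast_ne_zero.2 k.factorial_ne_zero)]

lemma continuous_multichoose (k : ℕ) : Continuous fun x : ℝ => multichoose x k := by
  simp only [multichoose_eq_ascPochhammer_eval_div]
  exact (ascPochhammer ℝ k).continuous.div_const _

lemma multichoose_succ_eq_div_mul {K : Type*} [Field K] [CharZero K] (x : K) (k : ℕ) :
    multichoose x (k + 1) = x / (k + 1) * multichoose (x + 1) k := by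
  rw [multichoose_eq_ascPochhammer_eval_div, multichoose_eq_ascPochhammer_eval_div,
    ascPochhammer_eval_succ_left, Nat.factorial_succ, Nat.cast_mul, Nat.cast_succ, div_mul_div_comm]

lemma ascPochhammer_eval_mem_Icc {s : ℝ} (hs : s ∈ Set.Icc 0 1) (k : ℕ) :
    (ascPochhammer ℝ k).eval s ∈ Set.Icc (0 : ℝ) k.factorial := by
  rw [ascPochhammer_eval_eq_prod_range, ← Finset.prod_range_add_one_eq_factorial]
  push_cast
  have hnonneg (i : ℕ) : 0 ≤ s + i := add_nonneg hs.1 i.cast_nonneg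
  exact ⟨Finset.prod_nonneg fun i _ => hnonneg i,
    Finset.prod_le_prod (fun i _ => hnonneg i) fun i _ => by linarith [hs.2]⟩

lemma abs_multichoose_sub_mul_pow_le {s : ℝ} (hs : s ∈ Set.Icc 0 1) (n j : ℕ) :
    |multichoose (s - j) (n + j)| * (n : ℝ) ^ j ≤ j.factorial := by
  induction j with
  | zero =>
    obtain ⟨h0, h1⟩ := ascPochhammer_eval_mem_Icc hs n
    simpa [multichoose_eq_ascPochhammer_eval_div, abs_div, abs_of_nonneg h0]
      using div_le_one_of_le₀ h1 n.factorial.cast_nonneg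
  | succ j ih =>
    have hshift : s - (j + 1 : ℕ) + 1 = s - j := by push_cast; ring
    have hfirst : |s - (j + 1 : ℕ)| ≤ j + 1 := by
      push_cast
      exact abs_le.2 ⟨by linarith [hs.1], by linarith [hs.2, (j.cast_nonneg : (0 : ℝ) ≤ j)]⟩
    have hratio : (n : ℝ) / (n + j + 1) ≤ 1 :=
      div_le_one_of_le₀ (by linarith [(j.cast_nonneg : (0 : ℝ) ≤ j)]) (by positivity)
    rw [← add_assoc, multichoose_succ_eq_div_mul, hshift, abs_mul, abs_div, Nat.factorial_succ]
    push_cast at hfirst ⊢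
    rw [abs_of_pos (by positivity : (0 : ℝ) < n + j + 1)]
    calc |s - (j + 1)| / (n + j + 1) * |multichoose (s - j) (n + j)| * (n : ℝ) ^ (j + 1)
        = |s - (j + 1)| * (n / (n + j + 1)) * (|multichoose (s - j) (n + j)| * (n : ℝ) ^ j) := by
          ring
      _ ≤ (j + 1) * 1 * j.factorial := by gcongr
      _ = (j + 1) * j.factorial := by ring

end Multichoose

section ForwardDifferences

open fwdDiff Ring

lemma fwdDiff_iter_multichoose {R : Type*} [CommRing R] [BinomialRing R] (x : R) (n j m : ℕ) :
    Δ_[1] ^[j] (fun m => multichoose x (m + n)) m = multichoose (x - j) (m + n + j) := by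
  induction j generalizing x n with
  | zero => simp
  | succ j ih =>
    have hpascal : Δ_[1] (fun m => multichoose x (m + n)) =
        fun m => multichoose (x - 1) (m + (n + 1)) := by
      funext m
      have h := multichoose_succ_succ (x - 1) (m + n)
      rw [sub_add_cancel] at h
      rw [fwdDiff, add_right_comm, h, add_sub_cancel_right, add_assoc]
    rw [Function.iterate_succ_apply, hpascal, ih]
    congr 1 <;> push_cast <;> ring

lemma fwdDiff_iter_intervalIntegral {f : ℕ → ℝ → ℝ} {a b : ℝ}
    (hf : ∀ m, IntervalIntegrable (f m) MeasureTheory.volume a b) (j m : ℕ) :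
    Δ_[1] ^[j] (fun m => ∫ s in a..b, f m s) m =
      ∫ s in a..b, Δ_[1] ^[j] (fun m => f m s) m := by
  induction j generalizing f with
  | zero => rfl
  | succ j ih =>
    have hdiff : Δ_[1] (fun m => ∫ s in a..b, f m s) =
        fun m => ∫ s in a..b, (f (m + 1) s - f m s) :=
      funext fun m => (intervalIntegral.integral_sub (hf (m + 1)) (hf m)).symm
    rw [Function.iterate_succ_apply, hdiff, ih fun m => (hf (m + 1)).sub (hf m)]
    rfl

lemma fwdDiff_iter_succ_mul_fwdDiff {R : Type*} [CommRing R] (f : ℕ → R) (j m : ℕ) :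
    Δ_[1] ^[j] (fun m : ℕ => (m + 1 : R) * Δ_[1] f m) m =
      (m + 1) * Δ_[1] ^[j + 1] f m + j * Δ_[1] ^[j] f (m + 1) := by
  induction j generalizing m with
  | zero => simp
  | succ j ih =>
    have hstep (g : ℕ → R) (i k : ℕ) :
        Δ_[1] ^[i + 1] g k = Δ_[1] ^[i] g (k + 1) - Δ_[1] ^[i] g k := by
      rw [Function.iterate_succ_apply', fwdDiff]
    rw [hstep, ih, ih, hstep f (j + 1) m]
    push_cast
    linear_combination -(j : R) * hstep f j (m + 1)

/-- The sequence analogue of a symbol of order zero: the `j`-th forward difference is `O(m⁻ʲ)`.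
Boundedness alone is not stable under `f ↦ (m + 1) Δf`, whereas this condition is. -/
def HasDecayingDifferences (f : ℕ → ℝ) : Prop :=
  ∀ j : ℕ, ∃ C, ∀ m : ℕ, |Δ_[1] ^[j] f m| * (m + 1 : ℝ) ^ j ≤ C

namespace HasDecayingDifferences

variable {f g : ℕ → ℝ}

lemma exists_abs_le (hf : HasDecayingDifferences f) : ∃ C, ∀ m, |f m| ≤ C := by
  simpa using hf 0

lemma sub (hf : HasDecayingDifferences f) (hg : HasDecayingDifferences g) :
    HasDecayingDifferences fun m => f m - g m := by
  intro j
  obtain ⟨C, hC⟩ := hf j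
  obtain ⟨D, hD⟩ := hg j
  have hsub (m : ℕ) :
      Δ_[1] ^[j] (fun m => f m - g m) m = Δ_[1] ^[j] f m - Δ_[1] ^[j] g m := by
    simp only [← fwdDiff_aux.coe_fwdDiffₗ_pow]
    exact congrFun (map_sub _ f g) m
  refine ⟨C + D, fun m => ?_⟩
  rw [hsub]
  calc |Δ_[1] ^[j] f m - Δ_[1] ^[j] g m| * (m + 1 : ℝ) ^ j
      ≤ (|Δ_[1] ^[j] f m| + |Δ_[1] ^[j] g m|) * (m + 1 : ℝ) ^ j := by gcongr; exact abs_sub _ _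
    _ ≤ C + D := by rw [add_mul]; exact add_le_add (hC m) (hD m)

lemma succ_mul_fwdDiff (hf : HasDecayingDifferences f) :
    HasDecayingDifferences fun m : ℕ => (m + 1 : ℝ) * Δ_[1] f m := by
  intro j
  obtain ⟨C, hC⟩ := hf (j + 1)
  obtain ⟨D, hD⟩ := hf j
  refine ⟨C + j * D, fun m => ?_⟩
  rw [fwdDiff_iter_succ_mul_fwdDiff]
  have hshift : |Δ_[1] ^[j] f (m + 1)| * (m + 1 : ℝ) ^ j ≤ D := by
    refine le_trans ?_ (hD (m + 1))
    push_cast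
    gcongr
    linarith
  calc |(m + 1) * Δ_[1] ^[j + 1] f m + j * Δ_[1] ^[j] f (m + 1)| * (m + 1 : ℝ) ^ j
      ≤ ((m + 1) * |Δ_[1] ^[j + 1] f m| + j * |Δ_[1] ^[j] f (m + 1)|) * (m + 1 : ℝ) ^ j := by
        gcongr
        refine (abs_add_le _ _).trans_eq ?_
        rw [abs_mul, abs_mul, abs_of_pos (by positivity : (0 : ℝ) < m + 1), Nat.abs_cast]
    _ = |Δ_[1] ^[j + 1] f m| * (m + 1 : ℝ) ^ (j + 1) +
          j * (|Δ_[1] ^[j] f (m + 1)| * (m + 1 : ℝ) ^ j) := by ring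
    _ ≤ C + j * D := by gcongr; exact hC m

end HasDecayingDifferences

lemma abs_fwdDiff_iter_multichoose_mul_pow_le {s : ℝ} (hs : s ∈ Set.Icc 0 1) (j m : ℕ) :
    |Δ_[1] ^[j] (fun m => multichoose s (m + 1)) m| * (m + 1 : ℝ) ^ j ≤ j.factorial := by
  rw [fwdDiff_iter_multichoose]
  exact_mod_cast abs_multichoose_sub_mul_pow_le hs (m + 1) j

lemma hasDecayingDifferences_multichoose {s : ℝ} (hs : s ∈ Set.Icc 0 1) :
    HasDecayingDifferences fun m => multichoose s (m + 1) :=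
  fun j => ⟨j.factorial, abs_fwdDiff_iter_multichoose_mul_pow_le hs j⟩

lemma hasDecayingDifferences_integral_multichoose :
    HasDecayingDifferences fun m => ∫ s in (0 : ℝ)..1, multichoose s (m + 1) := by
  refine fun j => ⟨j.factorial, fun m => ?_⟩
  rw [fwdDiff_iter_intervalIntegral
    fun m => (continuous_multichoose (m + 1)).intervalIntegrable _ _, ← le_div_iff₀ (by positivity)]
  have h := intervalIntegral.norm_integral_le_of_norm_le_const (a := 0) (b := 1)
    (f := fun s : ℝ => Δ_[1] ^[j] (fun m => multichoose s (m + 1)) m)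
    (C := j.factorial / (m + 1 : ℝ) ^ j) fun s hs => by
      rw [Set.uIoc_of_le zero_le_one] at hs
      rw [Real.norm_eq_abs, le_div_iff₀ (by positivity)]
      exact abs_fwdDiff_iter_multichoose_mul_pow_le (Set.Ioc_subset_Icc_self hs) j m
  simpa using h

end ForwardDifferences

section Coefficients

open Polynomial Finset Ring

/-- The coefficient of `1 / ((z + 1) ⋯ (z + k))` in the expansion of
`z ^ a * (log z - ψ(z + 1 - y) - ∑_{j ≤ a} B_j(y) / (j z ^ j))`; explicitly it is
`∑_l |S_k^{(1)}(l)| B_{l + a}(y) / (l + a)`. -/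
noncomputable def digammaCoeff (y : ℝ) (a k : ℕ) : ℝ :=
  bernoulliFunctional y (X ^ a * ascPochhammer ℝ k)

lemma digammaCoeff_eq_sum (y : ℝ) (a k : ℕ) :
    digammaCoeff y a k = ∑ l ∈ range (k + 1),
      (Nat.stirlingFirst k l : ℝ) * (bernoulliFun (l + a) y / (l + a : ℕ)) := by
  have hpoly : ascPochhammer ℝ k = ∑ l ∈ range (k + 1), (Nat.stirlingFirst k l : ℝ) • X ^ l := by
    conv_lhs => rw [(ascPochhammer ℝ k).as_sum_range_C_mul_X_pow, ascPochhammer_natDegree]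
    simp only [coeff_ascPochhammer, smul_eq_C_mul]
  rw [digammaCoeff, hpoly, mul_sum, map_sum]
  refine sum_congr rfl fun l _ => ?_
  rw [mul_smul_comm, ← pow_add, add_comm a l, map_smul, bernoulliFunctional_X_pow, smul_eq_mul]

lemma digammaCoeff_zero_right (y : ℝ) (a : ℕ) :
    digammaCoeff y a 0 = bernoulliFun a y / a := by
  simp [digammaCoeff, bernoulliFunctional_X_pow]

lemma digammaCoeff_succ_left (y : ℝ) (a k : ℕ) :
    digammaCoeff y (a + 1) k = digammaCoeff y a (k + 1) - k * digammaCoeff y a k := by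
  have hpoly : (X ^ (a + 1) * ascPochhammer ℝ k : ℝ[X]) =
      X ^ a * ascPochhammer ℝ (k + 1) - (k : ℝ) • (X ^ a * ascPochhammer ℝ k) := by
    rw [ascPochhammer_succ_right, Nat.cast_smul_eq_nsmul, nsmul_eq_mul]
    ring
  rw [digammaCoeff, hpoly, map_sub, map_smul, smul_eq_mul, digammaCoeff, digammaCoeff]

lemma natCast_mul_digammaCoeff_zero_left (y : ℝ) (k : ℕ) :
    k * digammaCoeff y 0 k =
      (ascPochhammer ℝ k).eval y - ∫ s in (0 : ℝ)..1, (ascPochhammer ℝ k).eval s := by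
  rw [← bernoulliFunctional_X_mul_comp_sub, X_mul_ascPochhammer_comp_sub,
    ← nsmul_eq_mul k (ascPochhammer ℝ k), map_nsmul, nsmul_eq_mul, digammaCoeff, pow_zero, one_mul]

lemma digammaCoeff_zero_left_div_factorial (y : ℝ) (m : ℕ) :
    digammaCoeff y 0 (m + 1) / m.factorial =
      multichoose y (m + 1) - ∫ s in (0 : ℝ)..1, multichoose s (m + 1) := by
  have h := natCast_mul_digammaCoeff_zero_left y (m + 1)
  simp only [multichoose_eq_ascPochhammer_eval_div, intervalIntegral.integral_div, ← sub_div, ← h]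
  rw [Nat.factorial_succ, Nat.cast_mul, mul_div_mul_left _ _ (Nat.cast_ne_zero.2 m.succ_ne_zero)]

lemma hasDecayingDifferences_digammaCoeff {y : ℝ} (hy : y ∈ Set.Icc 0 1) (a : ℕ) :
    HasDecayingDifferences fun m => digammaCoeff y a (m + 1) / m.factorial := by
  induction a with
  | zero =>
    simp only [digammaCoeff_zero_left_div_factorial]
    exact (hasDecayingDifferences_multichoose hy).sub hasDecayingDifferences_integral_multichoose
  | succ a ih =>
    convert ih.succ_mul_fwdDiff using 2 with m
    rw [fwdDiff, digammaCoeff_succ_left, Nat.factorial_succ]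
    push_cast
    field_simp

lemma exists_norm_digammaCoeff_le {y : ℝ} (hy : y ∈ Set.Icc 0 1) (a : ℕ) :
    ∃ C, ∀ m : ℕ, ‖(digammaCoeff y a (m + 1) : ℂ)‖ ≤ C * m.factorial := by
  obtain ⟨C, hC⟩ := (hasDecayingDifferences_digammaCoeff hy a).exists_abs_le
  refine ⟨C, fun m => ?_⟩
  rw [Complex.norm_real, Real.norm_eq_abs, ← div_le_iff₀ (by positivity),
    ← Nat.abs_cast m.factorial, ← abs_div]
  exact hC m

end Coefficients

section InverseFactorialSeries

open Polynomial Finset Filter Topology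

lemma sum_range_ascPochhammer_div {K : Type*} [Field K] {s x : K} (hxs : x - s ≠ 0)
    (hx : ∀ k, (ascPochhammer K k).eval x ≠ 0) (n : ℕ) :
    ∑ k ∈ range n, (ascPochhammer K k).eval s / (ascPochhammer K (k + 1)).eval x =
      (1 - (ascPochhammer K n).eval s / (ascPochhammer K n).eval x) / (x - s) := by
  induction n with
  | zero => simp
  | succ n ih =>
    have hn := hx n
    have hxn := hx (n + 1)
    rw [ascPochhammer_succ_eval] at hxn
    have hfactor := right_ne_zero_of_mul hxn
    rw [sum_range_succ, ih, ascPochhammer_succ_eval, ascPochhammer_succ_eval]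
    field_simp
    ring

lemma tendsto_factorial_div_ascPochhammer {x : ℝ} (hx : 0 < x) :
    Tendsto (fun k : ℕ => k.factorial / (ascPochhammer ℝ k).eval (x + 1)) atTop (𝓝 0) := by
  have hgamma : Tendsto (fun k : ℕ => x * (Real.GammaSeq x k / (k : ℝ) ^ x)) atTop (𝓝 0) := by
    simpa using ((Real.GammaSeq_tendsto_Gamma x).div_atTop
      ((tendsto_rpow_atTop hx).comp tendsto_natCast_atTop_atTop)).const_mul x
  refine hgamma.congr' ?_
  filter_upwards [eventually_gt_atTop 0] with k hk
  have hpow : (k : ℝ) ^ x ≠ 0 := (Real.rpow_pos_of_pos (Nat.cast_pos.2 hk) x).ne'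
  have hpos := (ascPochhammer_pos k (x + 1) (by positivity)).ne'
  rw [Real.GammaSeq, ← ascPochhammer_eval_eq_prod_range, ascPochhammer_eval_succ_left]
  field_simp

lemma hasSum_factorial_div_ascPochhammer {x : ℝ} (hx : 0 < x) :
    HasSum (fun k : ℕ => k.factorial / (ascPochhammer ℝ (k + 1)).eval (x + 1)) (1 / x) := by
  have hpos (k : ℕ) : 0 < (ascPochhammer ℝ k).eval (x + 1) :=
    ascPochhammer_pos k (x + 1) (by positivity)
  rw [hasSum_iff_tendsto_nat_of_nonneg fun k => div_nonneg k.factorial.cast_nonneg (hpos _).le]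
  have hsum := sum_range_ascPochhammer_div (s := (1 : ℝ)) (x := x + 1) (by simpa using hx.ne')
    fun k => (hpos k).ne'
  simp only [ascPochhammer_eval_one, add_sub_cancel_right] at hsum
  simp only [hsum]
  simpa using ((tendsto_factorial_div_ascPochhammer hx).const_sub 1).div_const x

lemma ascPochhammer_eval_le_norm {x : ℝ} (hx : 0 ≤ x) {w : ℂ} (hxw : x ≤ w.re) (k : ℕ) :
    (ascPochhammer ℝ k).eval x ≤ ‖(ascPochhammer ℂ k).eval w‖ := by
  rw [ascPochhammer_eval_eq_prod_range, ascPochhammer_eval_eq_prod_range, norm_prod]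
  refine prod_le_prod (fun i _ => by positivity) fun i _ => ?_
  calc x + i ≤ (w + i).re := by simpa using hxw
    _ ≤ ‖w + i‖ := Complex.re_le_norm _

lemma ascPochhammer_eval_ne_zero {w : ℂ} (hw : 0 < w.re) (k : ℕ) :
    (ascPochhammer ℂ k).eval w ≠ 0 :=
  norm_pos_iff.1 <|
    (ascPochhammer_pos k w.re hw).trans_le (ascPochhammer_eval_le_norm hw.le le_rfl k)

/-- The inverse factorial series `∑ c_k / ((z + 1) ⋯ (z + k + 1))`. -/
noncomputable def inverseFactorialSeries (c : ℕ → ℂ) (z : ℂ) : ℂ :=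
  ∑' k, c k / (ascPochhammer ℂ (k + 1)).eval (z + 1)

variable {c : ℕ → ℂ} {C : ℝ}

lemma norm_div_ascPochhammer_le (hc : ∀ k, ‖c k‖ ≤ C * k.factorial) {x : ℝ} (hx : 0 < x) {z : ℂ}
    (hz : x ≤ z.re) (k : ℕ) :
    ‖c k / (ascPochhammer ℂ (k + 1)).eval (z + 1)‖ ≤
      C * (k.factorial / (ascPochhammer ℝ (k + 1)).eval (x + 1)) := by
  have hpos := ascPochhammer_pos (k + 1) (x + 1) (by positivity)
  rw [norm_div, ← mul_div_assoc]
  gcongr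
  exacts [(norm_nonneg _).trans (hc k), hc k,
    ascPochhammer_eval_le_norm (by positivity) (by simpa using hz) (k + 1)]

lemma summable_norm_div_ascPochhammer (hc : ∀ k, ‖c k‖ ≤ C * k.factorial) {z : ℂ}
    (hz : 0 < z.re) : Summable fun k => ‖c k / (ascPochhammer ℂ (k + 1)).eval (z + 1)‖ :=
  ((hasSum_factorial_div_ascPochhammer hz).summable.mul_left C).of_nonneg_of_le
    (fun _ => norm_nonneg _) (norm_div_ascPochhammer_le hc hz le_rfl)

lemma hasSum_inverseFactorialSeries (hc : ∀ k, ‖c k‖ ≤ C * k.factorial) {z : ℂ}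
    (hz : 0 < z.re) :
    HasSum (fun k => c k / (ascPochhammer ℂ (k + 1)).eval (z + 1))
      (inverseFactorialSeries c z) :=
  (summable_norm_div_ascPochhammer hc hz).of_norm.hasSum

lemma norm_inverseFactorialSeries_le (hc : ∀ k, ‖c k‖ ≤ C * k.factorial) {z : ℂ}
    (hz : 0 < z.re) : ‖inverseFactorialSeries c z‖ ≤ C * (1 / z.re) :=
  tsum_of_norm_bounded ((hasSum_factorial_div_ascPochhammer hz).mul_left C)
    (norm_div_ascPochhammer_le hc hz le_rfl)

lemma differentiableAt_inverseFactorialSeries (hc : ∀ k, ‖c k‖ ≤ C * k.factorial) {z : ℂ}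
    (hz : 0 < z.re) : DifferentiableAt ℂ (inverseFactorialSeries c) z := by
  have hhalf := half_pos hz
  have hopen : IsOpen {u : ℂ | z.re / 2 < u.re} := isOpen_lt continuous_const Complex.continuous_re
  refine (Complex.differentiableOn_tsum_of_summable_norm
    ((hasSum_factorial_div_ascPochhammer hhalf).summable.mul_left C) (fun k u hu => ?_) hopen
    fun k u hu => norm_div_ascPochhammer_le hc hhalf (le_of_lt hu) k).differentiableAt
    (hopen.mem_nhds (half_lt_self hz))
  have hre : 0 < (u + 1).re := by simpa using (hhalf.trans hu).trans (lt_add_one u.re)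
  have hden : DifferentiableAt ℂ (fun u => (ascPochhammer ℂ (k + 1)).eval (u + 1)) u := by fun_prop
  exact ((differentiableAt_const (c k)).div hden
    (ascPochhammer_eval_ne_zero hre (k + 1))).differentiableWithinAt

lemma tendsto_div_ascPochhammer (hc : ∀ k, ‖c k‖ ≤ C * k.factorial) {z : ℂ} (hz : 0 < z.re) :
    Tendsto (fun k => c k / (ascPochhammer ℂ k).eval (z + 1)) atTop (𝓝 0) := by
  refine squeeze_zero_norm (fun k => ?_)
    (by simpa using (tendsto_factorial_div_ascPochhammer hz).const_mul C)
  have hpos := ascPochhammer_pos k (z.re + 1) (by positivity)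
  rw [norm_div, ← mul_div_assoc]
  gcongr
  exacts [(norm_nonneg _).trans (hc k), hc k,
    ascPochhammer_eval_le_norm (by positivity) (by simp) k]

lemma inverseFactorialSeries_succ_sub (hc : ∀ k, ‖c k‖ ≤ C * k.factorial) {D : ℝ}
    (hd : ∀ k : ℕ, ‖c (k + 1) - (k + 1) * c k‖ ≤ D * k.factorial) {z : ℂ} (hz : 0 < z.re) :
    inverseFactorialSeries (fun k => c (k + 1) - (k + 1) * c k) z =
      z * inverseFactorialSeries c z - c 0 := by
  have hre : 0 < (z + 1).re := by simpa using hz.trans (lt_add_one z.re)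
  have hterm (k : ℕ) :
      (c (k + 1) - (k + 1) * c k) / (ascPochhammer ℂ (k + 1)).eval (z + 1) =
        z * (c k / (ascPochhammer ℂ (k + 1)).eval (z + 1)) +
          (c (k + 1) / (ascPochhammer ℂ (k + 1)).eval (z + 1) -
            c k / (ascPochhammer ℂ k).eval (z + 1)) := by
    have hk := ascPochhammer_eval_ne_zero hre (k + 1)
    rw [ascPochhammer_succ_eval] at hk ⊢
    obtain ⟨hk₀, hk₁⟩ := mul_ne_zero_iff.1 hk
    field_simp
    ring
  refine tendsto_nhds_unique (hasSum_inverseFactorialSeries hd hz).tendsto_sum_nat ?_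
  simp only [hterm, sum_add_distrib, ← mul_sum,
    sum_range_sub fun k => c k / (ascPochhammer ℂ k).eval (z + 1)]
  simpa [sub_eq_add_neg] using
    ((hasSum_inverseFactorialSeries hc hz).tendsto_sum_nat.const_mul z).add
      ((tendsto_div_ascPochhammer hc hz).sub_const (c 0))

lemma hasSum_inverseFactorialSeries_sub_add_one (hc : ∀ k, ‖c k‖ ≤ C * k.factorial) {z : ℂ}
    (hz : 0 < z.re) :
    HasSum (fun k : ℕ => (k + 1) * c k / (ascPochhammer ℂ (k + 2)).eval (z + 1))
      (inverseFactorialSeries c z - inverseFactorialSeries c (z + 1)) := by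
  have hre : 0 < (z + 1).re := by simpa using hz.trans (lt_add_one z.re)
  refine ((hasSum_inverseFactorialSeries hc hz).sub
    (hasSum_inverseFactorialSeries hc hre)).congr_fun fun k => ?_
  have h := inv_ascPochhammer_eval_sub_inv (ascPochhammer_eval_ne_zero hre (k + 2))
  push_cast at h
  rw [div_eq_mul_inv (c k), div_eq_mul_inv (c k), ← mul_sub, h]
  ring

lemma norm_ascPochhammer_eval_ofReal_le {s : ℝ} (hs : s ∈ Set.Icc 0 1) (k : ℕ) :
    ‖(ascPochhammer ℂ k).eval (s : ℂ)‖ ≤ 1 * k.factorial := by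
  obtain ⟨h0, h1⟩ := ascPochhammer_eval_mem_Icc hs k
  rw [one_mul, ← ascPochhammer_eval_ofReal, Complex.norm_real, Real.norm_of_nonneg h0]
  exact h1

lemma hasSum_ascPochhammer_div {s : ℝ} (hs : s ∈ Set.Icc 0 1) {z : ℂ} (hz : 0 < z.re) :
    HasSum (fun k => (ascPochhammer ℂ k).eval (s : ℂ) / (ascPochhammer ℂ (k + 1)).eval (z + 1))
      (1 / (z + 1 - s)) := by
  have hc := norm_ascPochhammer_eval_ofReal_le hs
  have hre : 0 < (z + 1).re := by simpa using hz.trans (lt_add_one z.re)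
  have hsub : z + 1 - s ≠ 0 := fun h => by
    have := congrArg Complex.re h
    simp only [Complex.sub_re, Complex.add_re, Complex.one_re, Complex.ofReal_re,
      Complex.zero_re] at this
    linarith [hs.2]
  refine (summable_norm_div_ascPochhammer hc hz).of_norm.hasSum_iff_tendsto_nat.2 ?_
  simp only [sum_range_ascPochhammer_div hsub (ascPochhammer_eval_ne_zero hre)]
  simpa using ((tendsto_div_ascPochhammer hc hz).const_sub 1).div_const (z + 1 - s)

lemma integral_one_div_add_one_sub {z : ℂ} (hz : 0 < z.re) :
    ∫ s in (0 : ℝ)..1, 1 / (z + 1 - s) = Complex.log (z + 1) - Complex.log z := by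
  have hslit (s : ℝ) (hs : s ∈ Set.uIcc 0 1) : z + 1 - s ∈ Complex.slitPlane := by
    rw [Set.uIcc_of_le zero_le_one] at hs
    refine Or.inl ?_
    simp only [Complex.sub_re, Complex.add_re, Complex.one_re, Complex.ofReal_re]
    linarith [hs.2]
  have hderiv (s : ℝ) (hs : s ∈ Set.uIcc 0 1) :
      HasDerivAt (fun s : ℝ => -Complex.log (z + 1 - s)) (1 / (z + 1 - s)) s := by
    simpa [neg_div] using
      ((Complex.ofRealCLM.hasDerivAt.const_sub (z + 1)).clog_real (hslit s hs)).fun_neg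
  have hcont : ContinuousOn (fun s : ℝ => 1 / (z + 1 - s)) (Set.uIcc 0 1) :=
    continuousOn_const.div (by fun_prop) fun s hs => Complex.slitPlane_ne_zero (hslit s hs)
  rw [intervalIntegral.integral_eq_sub_of_hasDerivAt hderiv hcont.intervalIntegrable]
  simp [← sub_eq_neg_add]

lemma hasSum_integral_ascPochhammer_div {z : ℂ} (hz : 0 < z.re) :
    HasSum (fun k => (∫ s in (0 : ℝ)..1, (ascPochhammer ℂ k).eval (s : ℂ)) /
      (ascPochhammer ℂ (k + 1)).eval (z + 1)) (Complex.log (z + 1) - Complex.log z) := by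
  have hmem {s : ℝ} (hs : s ∈ Set.uIoc 0 1) : s ∈ Set.Icc (0 : ℝ) 1 := by
    rw [Set.uIoc_of_le zero_le_one] at hs
    exact Set.Ioc_subset_Icc_self hs
  rw [← integral_one_div_add_one_sub hz]
  simp only [← intervalIntegral.integral_div]
  refine intervalIntegral.hasSum_integral_of_dominated_convergence
    (fun k _ => 1 * (k.factorial / (ascPochhammer ℝ (k + 1)).eval (z.re + 1)))
    (fun k => Continuous.aestronglyMeasurable (by fun_prop))
    (fun k => .of_forall fun s hs => norm_div_ascPochhammer_le
      (norm_ascPochhammer_eval_ofReal_le (hmem hs)) hz le_rfl k)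
    (.of_forall fun _ _ => (hasSum_factorial_div_ascPochhammer hz).summable.mul_left 1)
    intervalIntegrable_const
    (.of_forall fun s hs => hasSum_ascPochhammer_div (hmem hs) hz)

end InverseFactorialSeries

section Remainder

open Polynomial Filter Topology

/-- The inverse factorial series with coefficients `digammaCoeff y a`, starting at `k = 1`. It is
minus the series in the expansion of the digamma function. -/
noncomputable def digammaRemainder (y : ℝ) (a : ℕ) (z : ℂ) : ℂ :=
  inverseFactorialSeries (fun k => digammaCoeff y a (k + 1)) z

variable {y : ℝ} {z : ℂ}

lemma digammaRemainder_succ (hy : y ∈ Set.Icc 0 1) (a : ℕ) (hz : 0 < z.re) :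
    digammaRemainder y (a + 1) z =
      z * digammaRemainder y a z - bernoulliFun (a + 1) y / (a + 1 : ℕ) := by
  obtain ⟨C, hC⟩ := exists_norm_digammaCoeff_le hy a
  obtain ⟨D, hD⟩ := exists_norm_digammaCoeff_le hy (a + 1)
  have hcoeff (k : ℕ) : (digammaCoeff y (a + 1) (k + 1) : ℂ) =
      digammaCoeff y a (k + 1 + 1) - (k + 1) * digammaCoeff y a (k + 1) := by
    rw [digammaCoeff_succ_left]
    push_cast
    rfl
  have hfirst : digammaCoeff y a (0 + 1) = bernoulliFun (a + 1) y / (a + 1 : ℕ) := by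
    rw [← digammaCoeff_zero_right, digammaCoeff_succ_left, Nat.cast_zero, zero_mul, sub_zero]
  simp only [hcoeff] at hD
  simp only [digammaRemainder, hcoeff]
  rw [inverseFactorialSeries_succ_sub hC hD hz, hfirst]
  push_cast
  rfl

lemma digammaRemainder_zero_sub_add_one (hy : y ∈ Set.Icc 0 1) (hz : 0 < z.re) :
    digammaRemainder y 0 z - digammaRemainder y 0 (z + 1) =
      1 / (z + 1 - y) - (Complex.log (z + 1) - Complex.log z) := by
  obtain ⟨C, hC⟩ := exists_norm_digammaCoeff_le hy 0
  have hcoeff (k : ℕ) : (ascPochhammer ℂ k).eval (y : ℂ) -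
      ∫ s in (0 : ℝ)..1, (ascPochhammer ℂ k).eval (s : ℂ) = k * digammaCoeff y 0 k := by
    simp only [← ascPochhammer_eval_ofReal]
    rw [intervalIntegral.integral_ofReal]
    exact_mod_cast (natCast_mul_digammaCoeff_zero_left y k).symm
  have hsum := (hasSum_ascPochhammer_div hy hz).sub (hasSum_integral_ascPochhammer_div hz)
  simp only [← sub_div, hcoeff] at hsum
  refine (hasSum_inverseFactorialSeries_sub_add_one hC hz).unique ?_
  simpa using (hasSum_nat_add_iff' 1).2 hsum

lemma tendsto_digammaRemainder_ofReal (hy : y ∈ Set.Icc 0 1) (a : ℕ) :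
    Tendsto (fun x : ℝ => digammaRemainder y a x) atTop (𝓝 0) := by
  obtain ⟨C, hC⟩ := exists_norm_digammaCoeff_le hy a
  refine squeeze_zero_norm' ?_ (by simpa using tendsto_inv_atTop_zero.const_mul C)
  filter_upwards [eventually_gt_atTop 0] with x hx
  simpa [digammaRemainder] using norm_inverseFactorialSeries_le hC (z := x) hx

lemma differentiableAt_digammaRemainder (hy : y ∈ Set.Icc 0 1) (a : ℕ) (hz : 0 < z.re) :
    DifferentiableAt ℂ (digammaRemainder y a) z := by
  obtain ⟨C, hC⟩ := exists_norm_digammaCoeff_le hy a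
  exact differentiableAt_inverseFactorialSeries hC hz

end Remainder

section Digamma

open Filter Topology Set

lemma ne_neg_natCast_of_re_pos {z : ℂ} (hz : 0 < z.re) (m : ℕ) : z ≠ -m := by
  rintro rfl
  rw [Complex.neg_re, Complex.natCast_re, neg_pos] at hz
  exact hz.not_ge m.cast_nonneg

lemma digamma_add_one {z : ℂ} (hz : 0 < z.re) : digamma (z + 1) = digamma z + 1 / z := by
  have h := Complex.digamma_apply_add_one z (ne_neg_natCast_of_re_pos hz)
  rwa [Complex.digamma_def, logDeriv_apply, logDeriv_apply, ← one_div] at h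

lemma differentiableAt_digamma {z : ℂ} (hz : 0 < z.re) : DifferentiableAt ℂ digamma z := by
  have hopen : IsOpen {u : ℂ | 0 < u.re} := isOpen_lt continuous_const Complex.continuous_re
  have hGamma : DifferentiableOn ℂ Complex.Gamma {u : ℂ | 0 < u.re} := fun u hu =>
    (Complex.differentiableAt_Gamma u (ne_neg_natCast_of_re_pos hu)).differentiableWithinAt
  have hmem := hopen.mem_nhds hz
  exact ((hGamma.deriv hopen).differentiableAt hmem).div (hGamma.differentiableAt hmem)
    (Complex.Gamma_ne_zero_of_re_pos hz)

variable {x : ℝ}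

lemma hasDerivAt_Gamma_of_pos (hx : 0 < x) :
    HasDerivAt Real.Gamma (deriv Real.Gamma x) x :=
  (Real.differentiableAt_Gamma fun m => by linarith [(m.cast_nonneg : (0 : ℝ) ≤ m)]).hasDerivAt

lemma digamma_ofReal (hx : 0 < x) : digamma x = (logDeriv Real.Gamma x : ℝ) := by
  have hcomplex := (Complex.differentiableAt_Gamma x
    (ne_neg_natCast_of_re_pos (by simpa using hx))).hasDerivAt.comp_ofReal
  simp only [Complex.Gamma_ofReal] at hcomplex
  rw [digamma, hcomplex.unique (hasDerivAt_Gamma_of_pos hx).ofReal_comp, Complex.Gamma_ofReal,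
    logDeriv_apply, Complex.ofReal_div]

lemma hasDerivAt_log_comp_Gamma (hx : 0 < x) :
    HasDerivAt (Real.log ∘ Real.Gamma) (logDeriv Real.Gamma x) x :=
  (hasDerivAt_Gamma_of_pos hx).log (Real.Gamma_pos_of_pos hx).ne'

lemma slope_log_comp_Gamma_add_one (hx : 0 < x) :
    slope (Real.log ∘ Real.Gamma) x (x + 1) = Real.log x := by
  rw [slope_def_field, Function.comp_apply, Function.comp_apply, Real.Gamma_add_one hx.ne',
    Real.log_mul hx.ne' (Real.Gamma_pos_of_pos hx).ne']
  ring

lemma logDeriv_Gamma_le_log (hx : 0 < x) : logDeriv Real.Gamma x ≤ Real.log x := by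
  rw [← slope_log_comp_Gamma_add_one hx]
  exact Real.convexOn_log_Gamma.le_slope_of_hasDerivAt hx (add_pos hx one_pos) (lt_add_one x)
    (hasDerivAt_log_comp_Gamma hx)

lemma log_le_logDeriv_Gamma_add_one (hx : 0 < x) :
    Real.log x ≤ logDeriv Real.Gamma (x + 1) := by
  rw [← slope_log_comp_Gamma_add_one hx]
  exact Real.convexOn_log_Gamma.slope_le_of_hasDerivAt hx (add_pos hx one_pos) (lt_add_one x)
    (hasDerivAt_log_comp_Gamma (add_pos hx one_pos))

lemma tendsto_digamma_sub_log (c : ℝ) :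
    Tendsto (fun x : ℝ => digamma (x + c) - Complex.log x) atTop (𝓝 0) := by
  have hreal : Tendsto (fun x => logDeriv Real.Gamma (x + c) - Real.log x) atTop (𝓝 0) := by
    refine tendsto_of_tendsto_of_tendsto_of_le_of_le'
      (Real.tendsto_log_comp_add_sub_log (c - 1)) (Real.tendsto_log_comp_add_sub_log c) ?_ ?_
    · filter_upwards [eventually_gt_atTop (1 - c)] with x hx
      have h := log_le_logDeriv_Gamma_add_one (x := x + (c - 1)) (by linarith)
      rw [add_assoc, sub_add_cancel] at h
      linarith
    · filter_upwards [eventually_gt_atTop (-c)] with x hx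
      linarith [logDeriv_Gamma_le_log (x := x + c) (by linarith)]
  rw [← Complex.ofReal_zero]
  refine hreal.ofReal.congr' ?_
  filter_upwards [eventually_gt_atTop 0, eventually_gt_atTop (-c)] with x hx hxc
  rw [← Complex.ofReal_add, digamma_ofReal (by linarith), Complex.ofReal_sub,
    Complex.ofReal_log hx.le]

lemma eq_of_apply_add_one_of_tendsto {E : Type*} [TopologicalSpace E] [T2Space E] {f : ℝ → E}
    {l : E} (hperiod : ∀ x, 0 < x → f (x + 1) = f x) (hlim : Tendsto f atTop (𝓝 l))
    (hx : 0 < x) : f x = l := by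
  have hshift (n : ℕ) : f (x + n) = f x := by
    induction n with
    | zero => simp
    | succ n ih => rw [Nat.cast_succ, ← add_assoc, hperiod _ (by positivity), ih]
  have hn : Tendsto (fun n : ℕ => x + n) atTop atTop :=
    tendsto_atTop_add_const_left _ x tendsto_natCast_atTop_atTop
  refine tendsto_nhds_unique ?_ (hlim.comp hn)
  simp only [Function.comp_def, hshift, tendsto_const_nhds]

lemma eqOn_re_pos_of_eq_ofReal {f g : ℂ → ℂ} (hf : DifferentiableOn ℂ f {z | 0 < z.re})
    (hg : DifferentiableOn ℂ g {z | 0 < z.re}) (hfg : ∀ x : ℝ, 0 < x → f x = g x) :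
    EqOn f g {z | 0 < z.re} := by
  have hopen : IsOpen {z : ℂ | 0 < z.re} := isOpen_lt continuous_const Complex.continuous_re
  refine (hf.analyticOnNhd hopen).eqOn_of_preconnected_of_frequently_eq (hg.analyticOnNhd hopen)
    (convex_halfSpace_re_gt 0).isPreconnected (z₀ := 1) (by simp) ?_
  have hofReal : Tendsto ((↑) : ℝ → ℂ) (𝓝[≠] 1) (𝓝[≠] 1) := by
    rw [← Complex.ofReal_one]
    exact Complex.continuous_ofReal.continuousWithinAt.tendsto_nhdsWithin
      fun _ hx => Complex.ofReal_injective.ne hx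
  have hpos : ∀ᶠ x : ℝ in 𝓝[≠] 1, 0 < x := eventually_nhdsWithin_of_eventually_nhds
    (lt_mem_nhds one_pos)
  exact hofReal.frequently (hpos.mono hfg).frequently

end Digamma

section Expansion

open Filter Topology Finset Polynomial

variable {y : ℝ} {z : ℂ}

lemma digamma_eq_log_sub_digammaRemainder_of_pos (hy : y ∈ Set.Icc 0 1) {x : ℝ} (hx : 0 < x) :
    digamma (x + 1 - y) = Complex.log x - digammaRemainder y 0 x := by
  suffices h : digamma (x + 1 - y) - Complex.log x + digammaRemainder y 0 x = 0 by
    linear_combination h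
  refine eq_of_apply_add_one_of_tendsto
    (f := fun x : ℝ => digamma (x + 1 - y) - Complex.log x + digammaRemainder y 0 x)
    (fun t ht => ?_) ?_ hx
  · have hrem := digammaRemainder_zero_sub_add_one hy (z := t) ht
    have hre : 0 < (t + 1 - y : ℂ).re := by simpa using by linarith [hy.2]
    have hdig := digamma_add_one hre
    push_cast
    rw [add_sub_right_comm _ 1 (y : ℂ), hdig]
    linear_combination -hrem
  · simpa [add_sub_assoc] using
      (tendsto_digamma_sub_log (1 - y)).add (tendsto_digammaRemainder_ofReal hy 0)

lemma digamma_eq_log_sub_digammaRemainder (hy : y ∈ Set.Icc 0 1) (hz : 0 < z.re) :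
    digamma (z + 1 - y) = Complex.log z - digammaRemainder y 0 z := by
  refine eqOn_re_pos_of_eq_ofReal (f := fun z => digamma (z + 1 - y))
    (g := fun z => Complex.log z - digammaRemainder y 0 z) (fun u hu => ?_) (fun u hu => ?_)
    (fun x hx => digamma_eq_log_sub_digammaRemainder_of_pos hy hx) hz
  · have hre : 0 < (u + 1 - y).re := by
      simpa using by linarith [hy.2, show 0 < u.re from hu]
    exact ((differentiableAt_digamma hre).comp u
      (by fun_prop : DifferentiableAt ℂ (fun u : ℂ => u + 1 - y) u)).differentiableWithinAt
  · exact ((Complex.differentiableAt_log (Or.inl hu)).sub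
      (differentiableAt_digammaRemainder hy 0 hu)).differentiableWithinAt

lemma digamma_eq_log_sub_sum_sub_digammaRemainder (hy : y ∈ Set.Icc 0 1) (hz : 0 < z.re)
    (a : ℕ) :
    digamma (z + 1 - y) = Complex.log z - ∑ k ∈ Icc 1 a, (bernPoly k y : ℂ) / (k * z ^ k) -
      1 / z ^ a * digammaRemainder y a z := by
  induction a with
  | zero => simpa using digamma_eq_log_sub_digammaRemainder hy hz
  | succ a ih =>
    have hz₀ : z ≠ 0 := fun h => hz.ne' (by simp [h])
    rw [ih, sum_Icc_succ_top (by lia), digammaRemainder_succ hy a hz, bernPoly_eq_bernoulliFun]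
    have ha : ((a + 1 : ℕ) : ℂ) ≠ 0 := Nat.cast_ne_zero.2 a.succ_ne_zero
    field_simp
    ring

lemma sum_S1_mul_bernPoly_eq_neg_digammaCoeff (y : ℝ) (a k : ℕ) :
    (-1 : ℂ) ^ (k + 1 + 1) * (∑ l ∈ Icc 1 (k + 1),
        (-1 : ℂ) ^ l / (l + a) * (S1 (k + 1) l : ℂ) * (bernPoly (l + a) y : ℂ)) =
      -digammaCoeff y a (k + 1) := by
  have hsign (l : ℕ) : (-1 : ℂ) ^ (k + 1 + 1) * (-1) ^ l * (-1) ^ (k + 1 + l) = -1 := by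
    rw [← pow_add, ← pow_add]
    exact Odd.neg_one_pow ⟨k + 1 + l, by ring⟩
  rw [digammaCoeff_eq_sum, sum_range_succ', Nat.stirlingFirst_succ_zero, Nat.cast_zero, zero_mul,
    add_zero, ← Ico_add_one_right_eq_Icc, sum_Ico_eq_sum_range, Nat.add_sub_cancel,
    Complex.ofReal_sum, mul_sum, ← sum_neg_distrib]
  refine sum_congr rfl fun l _ => ?_
  rw [S1, stirling1Unsigned_eq_stirlingFirst, bernPoly_eq_bernoulliFun, add_comm 1 l]
  push_cast
  linear_combination (Nat.stirlingFirst (k + 1) (l + 1) : ℂ) * bernoulliFun (l + 1 + a) y /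
    (l + 1 + a) * hsign (l + 1)

end Expansion

open Finset in
/-- Inverse factorial series expansion for the digamma function
(formula (24) of Theorem 4.3). -/
theorem digamma_inverse_factorial_series (y : ℝ) (hy0 : 0 ≤ y) (hy1 : y ≤ 1)
    (a : ℕ) (z : ℂ) (hz : 0 < z.re) :
    Summable (fun k : ℕ =>
      ‖(-1 : ℂ) ^ (k + 1 + 1) *
          (∑ l ∈ Icc 1 (k + 1),
            (-1 : ℂ) ^ l / (l + a) * (S1 (k + 1) l : ℂ) * (bernPoly (l + a) y : ℂ)) /
        risingProd z (k + 1)‖) ∧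
    digamma (z + 1 - y) =
      Complex.log z - ∑ k ∈ Icc 1 a, (bernPoly k y : ℂ) / (k * z ^ k) +
        1 / z ^ a *
          ∑' k : ℕ,
            (-1 : ℂ) ^ (k + 1 + 1) *
                (∑ l ∈ Icc 1 (k + 1),
                  (-1 : ℂ) ^ l / (l + a) * (S1 (k + 1) l : ℂ) * (bernPoly (l + a) y : ℂ)) /
              risingProd z (k + 1) := by
  simp only [sum_S1_mul_bernPoly_eq_neg_digammaCoeff, risingProd_eq_ascPochhammer_eval, neg_div,
    norm_neg, tsum_neg, mul_neg, ← sub_eq_add_neg]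
  obtain ⟨C, hC⟩ := exists_norm_digammaCoeff_le ⟨hy0, hy1⟩ a
  exact ⟨summable_norm_div_ascPochhammer hC hz,
    digamma_eq_log_sub_sum_sub_digammaRemainder ⟨hy0, hy1⟩ hz a⟩
end
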